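/- Let (H_•, P_•) be a Hilbert complex of length n, and for 0 ≤ k ≤ n let Δ_k be the Laplace-type operator P*_k P_k + P_{k−1} P*_{k−1} with domain dom(Δ_k) = { v ∈ dom(P_k) ∩ dom(P*_{k−1}) : P_k v ∈ dom(P*_k) and P*_{k−1} v ∈ dom(P_{k−1}) }. Then the complex is Fredholm (i.e. the cohomology H^k := ker(P_k)/ran(P_{k−1}) is finite dimensional for every k) if and only if, for every k, Δ_k is a Fredholm operator, i.e. ker(Δ_k) is finite dimensional and ran(Δ_k) is closed and of finite codimension in H_k. -/

import Mathlib

/-!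
The argument is local at a node `E₀ —Q→ E₁ —P→ E₂` of the complex, with `Δ = P* P + Q Q*`.

If `ran Δ` has finite codimension, so has `ker P ∩ ran Δ` in `ker P`. A cocycle `P* P x + Q Q* x`
has its first summand in `ker P ∩ (ker P)ᗮ = 0`, so `ker P ∩ ran Δ ⊆ ran Q`
(`pker_inf_pran_nodeLap_le`) and the cohomology is finite dimensional.

Conversely, finite dimensional cohomology forces every `ran P_k` to be closed, because a closed
operator whose range has finite codimension in a closed subspace has closed range
(`isClosed_pran_of_finiteDimensional`). The closed range theorem (`exists_adjoint_graph`) then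
gives `ran Δ ⊇ (ker P ∩ ker Q*)ᗮ` (`harmonic_orthogonal_le_pran_nodeLap`), while
`⟪x, Δ x⟫ = ‖P x‖² + ‖Q* x‖²` gives `ker Δ ⊆ ker P ∩ ker Q*` (`pker_nodeLap_le`). The harmonic
space `ker P ∩ ker Q* = ker P ∩ (ran Q)ᗮ` injects into the cohomology, hence is finite dimensional,
and a subspace containing a closed subspace of finite codimension is itself closed of finite
codimension.

In degree `0` the incoming operator is the everywhere defined zero operator, with range `⊥`; in
degree `n` the outgoing operator is zero, so its range is closed.
-/

open LinearMap Submodule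

noncomputable section

variable {H : ℕ → Type}
  [∀ k, NormedAddCommGroup (H k)] [∀ k, InnerProductSpace ℂ (H k)]
  [∀ k, CompleteSpace (H k)]

/-- The kernel of a partially defined operator, as a submodule of the ambient space. -/
def pker {E F : Type} [NormedAddCommGroup E] [InnerProductSpace ℂ E]
    [NormedAddCommGroup F] [InnerProductSpace ℂ F] (T : E →ₗ.[ℂ] F) : Submodule ℂ E :=
  (LinearMap.ker T.toFun).map T.domain.subtype

/-- The range of a partially defined operator. -/
def pran {E F : Type} [NormedAddCommGroup E] [InnerProductSpace ℂ E]
    [NormedAddCommGroup F] [InnerProductSpace ℂ F] (T : E →ₗ.[ℂ] F) : Submodule ℂ F :=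
  LinearMap.range T.toFun

/-- `ran(P_{k−1})`, with the convention `P_{−1} = 0`. -/
def prevRange (P : ∀ k, H k →ₗ.[ℂ] H (k + 1)) : ∀ k, Submodule ℂ (H k)
  | 0 => ⊥
  | (k + 1) => pran (P k)

/-- `ker(P*_{k−1})`, with the convention `P_{−1} = 0` (so that it is everything in degree 0). -/
def prevKerAdj (P : ∀ k, H k →ₗ.[ℂ] H (k + 1)) : ∀ k, Submodule ℂ (H k)
  | 0 => ⊤
  | (k + 1) => pker ((P k).adjoint)

/-- The harmonic space `Ĥ^k = ker(P_k) ∩ ker(P*_{k−1})`. -/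
abbrev harmonicSp (P : ∀ k, H k →ₗ.[ℂ] H (k + 1)) (k : ℕ) : Submodule ℂ (H k) :=
  pker (P k) ⊓ prevKerAdj P k


section NodeLaplacian

variable {E₀ E₁ E₂ : Type}
  [NormedAddCommGroup E₀] [InnerProductSpace ℂ E₀] [CompleteSpace E₀]
  [NormedAddCommGroup E₁] [InnerProductSpace ℂ E₁] [CompleteSpace E₁]
  [NormedAddCommGroup E₂] [InnerProductSpace ℂ E₂] [CompleteSpace E₂]

/-- The domain of the Laplace-type operator `Δ = P* P + Q Q*` at the node `E₁` of
`E₀ —Q→ E₁ —P→ E₂`: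
`dom(Δ) = { v ∈ dom(P) ∩ dom(Q*) : P v ∈ dom(P*), Q* v ∈ dom(Q) }`. -/
abbrev lapDomain (Q : E₀ →ₗ.[ℂ] E₁) (P : E₁ →ₗ.[ℂ] E₂) : Submodule ℂ E₁ :=
  ((P.adjoint.domain.comap P.toFun).map P.domain.subtype) ⊓
    ((Q.domain.comap Q.adjoint.toFun).map Q.adjoint.domain.subtype)

/-- The Laplace-type operator `Δ = P* P + Q Q*` at the node `E₁` of `E₀ —Q→ E₁ —P→ E₂`,
as a partially defined operator with the domain `lapDomain Q P`. -/
noncomputable def nodeLap (Q : E₀ →ₗ.[ℂ] E₁) (P : E₁ →ₗ.[ℂ] E₂) : E₁ →ₗ.[ℂ] E₁ where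
  domain := lapDomain Q P
  toFun :=
    P.adjoint.toFun ∘ₗ
        (LinearMap.codRestrict P.adjoint.domain
          (P.toFun ∘ₗ (P.adjoint.domain.comap P.toFun).subtype)
          (fun z => Submodule.mem_comap.mp z.2)) ∘ₗ
        (Submodule.equivSubtypeMap P.domain (P.adjoint.domain.comap P.toFun)).symm.toLinearMap ∘ₗ
        Submodule.inclusion inf_le_left
      + Q.toFun ∘ₗ
        (LinearMap.codRestrict Q.domain
          (Q.adjoint.toFun ∘ₗ (Q.domain.comap Q.adjoint.toFun).subtype)
          (fun z => Submodule.mem_comap.mp z.2)) ∘ₗ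
        (Submodule.equivSubtypeMap Q.adjoint.domain
          (Q.domain.comap Q.adjoint.toFun)).symm.toLinearMap ∘ₗ
        Submodule.inclusion inf_le_right

end NodeLaplacian

/-- The Laplace-type operator `Δ_k = P*_k P_k + P_{k−1} P*_{k−1}` of the Hilbert complex
`(H, P)` (with the convention `P_{−1} = 0`). -/
noncomputable def lapAt (P : ∀ k, H k →ₗ.[ℂ] H (k + 1)) : ∀ k, H k →ₗ.[ℂ] H k
  | 0 => nodeLap (0 : H 0 →ₗ.[ℂ] H 0) (P 0)
  | (k + 1) => nodeLap (P k) (P (k + 1))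

set_option linter.unusedSectionVars false

/-! ### Operators described by their graphs -/

section aux
variable {E F : Type} [NormedAddCommGroup E] [InnerProductSpace ℂ E]
    [NormedAddCommGroup F] [InnerProductSpace ℂ F]

theorem mem_pran_iff (T : E →ₗ.[ℂ] F) (y : F) : y ∈ pran T ↔ ∃ x, (x, y) ∈ T.graph := by
  simp only [pran, LinearMap.mem_range, LinearPMap.mem_graph_iff]
  constructor
  · rintro ⟨x, hx⟩
    exact ⟨x, x, rfl, hx⟩
  · rintro ⟨_, x, -, hx⟩
    exact ⟨x, hx⟩

theorem mem_pker_iff (T : E →ₗ.[ℂ] F) (x : E) : x ∈ pker T ↔ (x, (0 : F)) ∈ T.graph := by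
  simp only [pker, Submodule.mem_map, LinearMap.mem_ker, LinearPMap.mem_graph_iff]
  constructor
  · rintro ⟨x, hx, rfl⟩
    exact ⟨x, rfl, hx⟩
  · rintro ⟨x, rfl, hx⟩
    exact ⟨x, hx, rfl⟩

theorem mem_adjoint_graph_iff [CompleteSpace E] {T : E →ₗ.[ℂ] F}
    (hT : Dense (T.domain : Set E)) (z : F) (w : E) :
    (z, w) ∈ T.adjoint.graph ↔ ∀ x y, (x, y) ∈ T.graph → inner ℂ y z = inner ℂ x w := by
  rw [LinearPMap.adjoint_graph_eq_graph_adjoint hT, Submodule.mem_adjoint_iff]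
  simp only [sub_eq_zero]

/-- `Δ x = y` means `y = P* (P x) + Q (Q* x)`, all four values being defined; stated through graphs
to avoid the subtypes in the definition of `nodeLap`. -/
theorem mem_nodeLap_graph_iff {E₀ E₁ E₂ : Type}
    [NormedAddCommGroup E₀] [InnerProductSpace ℂ E₀] [CompleteSpace E₀]
    [NormedAddCommGroup E₁] [InnerProductSpace ℂ E₁] [CompleteSpace E₁]
    [NormedAddCommGroup E₂] [InnerProductSpace ℂ E₂] [CompleteSpace E₂]
    (Q : E₀ →ₗ.[ℂ] E₁) (P : E₁ →ₗ.[ℂ] E₂) (x y : E₁) :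
    (x, y) ∈ (nodeLap Q P).graph ↔ ∃ p a q b, (x, p) ∈ P.graph ∧ (p, a) ∈ P.adjoint.graph ∧
      (x, q) ∈ Q.adjoint.graph ∧ (q, b) ∈ Q.graph ∧ y = a + b := by
  have key : ∀ (hx : x ∈ P.domain) (hp : P ⟨x, hx⟩ ∈ P.adjoint.domain)
      (hx' : x ∈ Q.adjoint.domain) (hq : Q.adjoint ⟨x, hx'⟩ ∈ Q.domain)
      (h : x ∈ (nodeLap Q P).domain),
      nodeLap Q P ⟨x, h⟩ = P.adjoint ⟨P ⟨x, hx⟩, hp⟩ + Q ⟨Q.adjoint ⟨x, hx'⟩, hq⟩ := by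
    intro hx hp hx' hq h
    have e1 : (Submodule.equivSubtypeMap P.domain (P.adjoint.domain.comap P.toFun)).symm
        (Submodule.inclusion inf_le_left (⟨x, h⟩ : lapDomain Q P)) = ⟨⟨x, hx⟩, hp⟩ := by
      rw [LinearEquiv.symm_apply_eq]; rfl
    have e2 : (Submodule.equivSubtypeMap Q.adjoint.domain
          (Q.domain.comap Q.adjoint.toFun)).symm
        (Submodule.inclusion inf_le_right (⟨x, h⟩ : lapDomain Q P)) = ⟨⟨x, hx'⟩, hq⟩ := by
      rw [LinearEquiv.symm_apply_eq]; rfl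
    change P.adjoint.toFun (LinearMap.codRestrict _ _ _ ((Submodule.equivSubtypeMap P.domain
      (P.adjoint.domain.comap P.toFun)).symm
        (Submodule.inclusion inf_le_left (⟨x, h⟩ : lapDomain Q P)))) +
      Q.toFun (LinearMap.codRestrict _ _ _ ((Submodule.equivSubtypeMap Q.adjoint.domain
          (Q.domain.comap Q.adjoint.toFun)).symm
        (Submodule.inclusion inf_le_right (⟨x, h⟩ : lapDomain Q P)))) = _
    rw [e1, e2]
    rfl
  simp only [LinearPMap.mem_graph_iff]
  constructor
  · rintro ⟨⟨x, h⟩, rfl, rfl⟩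
    obtain ⟨⟨⟨x, hx⟩, hp, rfl⟩, ⟨⟨x', hx'⟩, hq, hxx⟩⟩ := id h
    obtain rfl : x' = x := hxx
    exact ⟨_, _, _, _, ⟨⟨_, hx⟩, rfl, rfl⟩, ⟨⟨_, hp⟩, rfl, rfl⟩, ⟨⟨_, hx'⟩, rfl, rfl⟩,
      ⟨⟨_, hq⟩, rfl, rfl⟩, key hx hp hx' hq h⟩
  · rintro ⟨_, _, _, _, ⟨⟨x, hx⟩, rfl, rfl⟩, ⟨⟨p, hp⟩, hpp, rfl⟩, ⟨⟨x', hx'⟩, hxx, rfl⟩,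
      ⟨⟨q, hq⟩, hqq, rfl⟩, rfl⟩
    obtain rfl : p = _ := hpp
    obtain rfl : x' = x := hxx
    obtain rfl : q = _ := hqq
    have h : x' ∈ (nodeLap Q P).domain := ⟨⟨⟨x', hx⟩, hp, rfl⟩, ⟨⟨x', hx'⟩, hq, rfl⟩⟩
    exact ⟨⟨x', h⟩, rfl, key hx hp hx' hq h⟩

/-! ### Closed range theorem for closed operators -/

variable [CompleteSpace E] [CompleteSpace F]

theorem isClosed_pker {T : E →ₗ.[ℂ] F} (hT : T.IsClosed) : IsClosed (pker T : Set E) := by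
  have : (pker T : Set E) = (fun x : E => (x, (0 : F))) ⁻¹' (T.graph : Set (E × F)) := by
    ext x
    exact mem_pker_iff T x
  rw [this]
  exact IsClosed.preimage (by fun_prop) hT

/-- Every value of a closed operator is attained on the orthogonal complement of the kernel. -/
theorem exists_graph_orthogonal {T : E →ₗ.[ℂ] F} (hT : T.IsClosed) {x : E} {y : F}
    (h : (x, y) ∈ T.graph) :
    ∃ x', (x', y) ∈ T.graph ∧ x' ∈ (pker T)ᗮ ∧ x - x' ∈ pker T := by
  have : CompleteSpace (pker T) := (isClosed_pker hT).completeSpace_coe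
  refine ⟨x - (pker T).starProjection x, ?_, Submodule.sub_starProjection_mem_orthogonal x, ?_⟩
  · have := T.graph.sub_mem h ((mem_pker_iff T _).1 ((pker T).starProjection_apply_mem x))
    simpa using this
  · simp

/-- The graph of the restriction of `T` to the orthogonal complement of its kernel. -/
def reducedGraph (T : E →ₗ.[ℂ] F) : Submodule ℂ (E × F) :=
  T.graph ⊓ (pker T)ᗮ.comap (LinearMap.fst ℂ E F)

theorem isClosed_reducedGraph {T : E →ₗ.[ℂ] F} (hT : T.IsClosed) :
    IsClosed (reducedGraph T : Set (E × F)) :=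
  IsClosed.inter hT ((Submodule.isClosed_orthogonal (pker T)).preimage continuous_fst)

theorem eq_zero_of_mem_reducedGraph {T : E →ₗ.[ℂ] F} {z : E × F} (hz : z ∈ reducedGraph T)
    (h : z.2 = 0) : z = 0 := by
  obtain ⟨x, y⟩ := z
  obtain rfl : y = 0 := h
  have h0 : x = 0 := by
    have := (pker T).inf_orthogonal_eq_bot.le ⟨(mem_pker_iff T x).2 hz.1, hz.2⟩
    simpa using this
  rw [h0]
  rfl

/-- The second projection from the reduced graph of `T` to a subspace containing the range. -/
def reducedMap (T : E →ₗ.[ℂ] F) (K : Submodule ℂ F) (hK : pran T ≤ K) : reducedGraph T →L[ℂ] K :=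
  ((ContinuousLinearMap.snd ℂ E F).comp (reducedGraph T).subtypeL).codRestrict K
    (fun z => hK ((mem_pran_iff T _).2 ⟨z.1.1, z.2.1⟩))

theorem ker_reducedMap (T : E →ₗ.[ℂ] F) (K : Submodule ℂ F) (hK : pran T ≤ K) :
    (reducedMap T K hK).ker = ⊥ := by
  rw [LinearMap.ker_eq_bot']
  intro z hz
  exact Subtype.ext (eq_zero_of_mem_reducedGraph z.2 (congrArg Subtype.val hz))

theorem range_reducedMap {T : E →ₗ.[ℂ] F} (hT : T.IsClosed) (K : Submodule ℂ F)
    (hK : pran T ≤ K) : (reducedMap T K hK).range = (pran T).comap K.subtype := by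
  ext y
  simp only [LinearMap.mem_range, Submodule.mem_comap, mem_pran_iff]
  constructor
  · rintro ⟨z, rfl⟩
    exact ⟨z.1.1, z.2.1⟩
  · rintro ⟨x, hx⟩
    obtain ⟨x', h1, h2, -⟩ := exists_graph_orthogonal hT hx
    exact ⟨⟨(x', y), h1, h2⟩, rfl⟩

/-- A closed operator whose range has finite codimension in a closed subspace has closed range. -/
theorem isClosed_pran_of_finiteDimensional {T : E →ₗ.[ℂ] F} (hT : T.IsClosed)
    {K : Submodule ℂ F} (hKc : IsClosed (K : Set F)) (hK : pran T ≤ K)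
    (hfin : FiniteDimensional ℂ (K ⧸ (pran T).comap K.subtype)) :
    IsClosed (pran T : Set F) := by
  have : CompleteSpace K := hKc.completeSpace_coe
  have : CompleteSpace (reducedGraph T) := (isClosed_reducedGraph hT).completeSpace_coe
  obtain ⟨G, hG⟩ := Submodule.exists_isCompl ((pran T).comap K.subtype)
  have hGfin : FiniteDimensional ℂ G :=
    Module.Finite.equiv (Submodule.quotientEquivOfIsCompl _ _ hG)
  have h1 := (reducedMap T K hK).closed_complemented_range_of_isCompl_of_ker_eq_bot G
    (by rwa [range_reducedMap hT]) G.closed_of_finiteDimensional (ker_reducedMap T K hK)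
  rw [range_reducedMap hT] at h1
  have h2 := hKc.isClosedEmbedding_subtypeVal.isClosedMap _ h1
  convert h2 using 1
  ext y
  simp only [Set.mem_image, SetLike.mem_coe, Submodule.mem_comap]
  exact ⟨fun hy => ⟨⟨y, hK hy⟩, hy, rfl⟩, by rintro ⟨y, hy, rfl⟩; exact hy⟩

/-- One half of the closed range theorem: if `T` has closed range, then every vector orthogonal to
`ker T` has the form `T* z`, and `z` may be chosen in the range of `T`. The vector `z` is the
image of `b` under the adjoint of the bounded inverse `ran T → (ker T)ᗮ`. -/
theorem exists_adjoint_graph {T : E →ₗ.[ℂ] F} (hd : Dense (T.domain : Set E)) (hT : T.IsClosed)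
    (hran : IsClosed (pran T : Set F)) {b : E} (hb : b ∈ (pker T)ᗮ) :
    ∃ z ∈ pran T, (z, b) ∈ T.adjoint.graph := by
  have : CompleteSpace (pran T) := hran.completeSpace_coe
  have : CompleteSpace (reducedGraph T) := (isClosed_reducedGraph hT).completeSpace_coe
  let e := ContinuousLinearEquiv.ofBijective (reducedMap T (pran T) le_rfl)
    (ker_reducedMap T _ le_rfl) (by rw [range_reducedMap hT]; simp)
  let R : pran T →L[ℂ] E := ((ContinuousLinearMap.fst ℂ E F).comp (reducedGraph T).subtypeL).comp
    (e.symm : pran T →L[ℂ] reducedGraph T)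
  refine ⟨R.adjoint b, (R.adjoint b).2, (mem_adjoint_graph_iff hd _ _).2 fun x y hxy => ?_⟩
  obtain ⟨x', h1, h2, h3⟩ := exists_graph_orthogonal hT hxy
  have hy : y ∈ pran T := (mem_pran_iff T y).2 ⟨x, hxy⟩
  have hR : R ⟨y, hy⟩ = x' := by
    have : e.symm ⟨y, hy⟩ = ⟨(x', y), h1, h2⟩ := by
      rw [ContinuousLinearEquiv.symm_apply_eq]
      rfl
    change ((e.symm ⟨y, hy⟩ : reducedGraph T) : E × F).1 = x'
    rw [this]
  have h4 : inner ℂ (⟨y, hy⟩ : pran T) (R.adjoint b) = inner ℂ x' b := by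
    rw [ContinuousLinearMap.adjoint_inner_right, hR]
  have h5 : inner ℂ (x - x') b = 0 := hb _ h3
  rw [inner_sub_left, sub_eq_zero] at h5
  rw [h5]
  exact h4

theorem pker_adjoint {T : E →ₗ.[ℂ] F} (hd : Dense (T.domain : Set E)) :
    pker T.adjoint = (pran T)ᗮ := by
  ext z
  rw [mem_pker_iff, mem_adjoint_graph_iff hd, Submodule.mem_orthogonal]
  simp only [mem_pran_iff, inner_zero_right]
  exact ⟨fun h y ⟨x, hx⟩ => h x y hx, fun h x y hx => h y ⟨x, hx⟩⟩

theorem pran_adjoint_le {T : E →ₗ.[ℂ] F} (hd : Dense (T.domain : Set E)) :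
    pran T.adjoint ≤ (pker T)ᗮ := by
  intro w hw x hx
  obtain ⟨z, hz⟩ := (mem_pran_iff _ _).1 hw
  rw [← (mem_adjoint_graph_iff hd z w).1 hz x 0 ((mem_pker_iff T x).1 hx), inner_zero_left]

end aux

/-! ### The Laplacian at one node -/

section node
variable {E₀ E₁ E₂ : Type}
    [NormedAddCommGroup E₀] [InnerProductSpace ℂ E₀] [CompleteSpace E₀]
    [NormedAddCommGroup E₁] [InnerProductSpace ℂ E₁] [CompleteSpace E₁]
    [NormedAddCommGroup E₂] [InnerProductSpace ℂ E₂] [CompleteSpace E₂]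
    {Q : E₀ →ₗ.[ℂ] E₁} {P : E₁ →ₗ.[ℂ] E₂}

/-- A cocycle in the range of `Δ` is a coboundary: its `P* P` component lies in
`ker P ∩ (ker P)ᗮ`. -/
theorem pker_inf_pran_nodeLap_le (hPd : Dense (P.domain : Set E₁)) (hQP : pran Q ≤ pker P) :
    pker P ⊓ pran (nodeLap Q P) ≤ pran Q := by
  rintro y ⟨hy, hy'⟩
  obtain ⟨x, hx⟩ := (mem_pran_iff _ _).1 hy'
  obtain ⟨p, a, q, b, -, ha, -, hb, rfl⟩ := (mem_nodeLap_graph_iff Q P x y).1 hx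
  have hbQ : b ∈ pran Q := (mem_pran_iff _ _).2 ⟨q, hb⟩
  have haP : a ∈ pker P := by simpa using (pker P).sub_mem hy (hQP hbQ)
  have ha' : a ∈ (pker P)ᗮ := pran_adjoint_le hPd ((mem_pran_iff _ _).2 ⟨p, ha⟩)
  have : a = 0 := by simpa using (pker P).inf_orthogonal_eq_bot.le ⟨haP, ha'⟩
  simpa [this] using hbQ

theorem finiteDimensional_cohomology (hPd : Dense (P.domain : Set E₁)) (hQP : pran Q ≤ pker P)
    (hfin : FiniteDimensional ℂ (E₁ ⧸ pran (nodeLap Q P))) :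
    FiniteDimensional ℂ (pker P ⧸ (pran Q).comap (pker P).subtype) := by
  let f : pker P →ₗ[ℂ] E₁ ⧸ pran (nodeLap Q P) := (pran (nodeLap Q P)).mkQ ∘ₗ (pker P).subtype
  have h1 : FiniteDimensional ℂ (pker P ⧸ LinearMap.ker f) :=
    Module.Finite.equiv f.quotKerEquivRange.symm
  have hle : LinearMap.ker f ≤ (pran Q).comap (pker P).subtype := by
    intro x hx
    have hx' : (x : E₁) ∈ pran (nodeLap Q P) := by simpa [f] using hx
    exact pker_inf_pran_nodeLap_le hPd hQP ⟨x.2, hx'⟩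
  exact Module.Finite.of_surjective (Submodule.factor hle) (Submodule.factor_surjective hle)

/-- Harmonic vectors inject into the cohomology. -/
theorem finiteDimensional_harmonic
    (hfin : FiniteDimensional ℂ (pker P ⧸ (pran Q).comap (pker P).subtype)) :
    FiniteDimensional ℂ ↥(pker P ⊓ (pran Q)ᗮ) := by
  let f := ((pran Q).comap (pker P).subtype).mkQ ∘ₗ
    Submodule.inclusion (inf_le_left : pker P ⊓ (pran Q)ᗮ ≤ pker P)
  refine Module.Finite.of_injective f ((injective_iff_map_eq_zero f).2 fun x hx => ?_)
  have h1 : (x : E₁) ∈ pran Q := by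
    simpa [f, Submodule.Quotient.mk_eq_zero] using hx
  have : (x : E₁) = 0 := by simpa using (pran Q).inf_orthogonal_eq_bot.le ⟨h1, x.2.2⟩
  exact Subtype.ext this

/-- `⟪x, Δ x⟫ = ‖P x‖² + ‖Q* x‖²`, so the kernel of `Δ` consists of harmonic vectors. -/
theorem pker_nodeLap_le (hPd : Dense (P.domain : Set E₁)) (hQd : Dense (Q.domain : Set E₀)) :
    pker (nodeLap Q P) ≤ pker P ⊓ (pran Q)ᗮ := by
  intro x hx
  obtain ⟨p, a, q, b, hp, ha, hq, hb, h0⟩ :=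
    (mem_nodeLap_graph_iff Q P x 0).1 ((mem_pker_iff _ _).1 hx)
  have h1 : inner ℂ p p = inner ℂ x a := (mem_adjoint_graph_iff hPd p a).1 ha x p hp
  have h2 : inner ℂ b x = inner ℂ q q := (mem_adjoint_graph_iff hQd x q).1 hq q b hb
  have h3 : inner ℂ x b = inner ℂ q q := by
    rw [← inner_conj_symm, h2, inner_conj_symm]
  have h4 : inner ℂ p p + inner ℂ q q = (0 : ℂ) := by
    rw [h1, ← h3, ← inner_add_right, ← h0, inner_zero_right]
  rw [inner_self_eq_norm_sq_to_K, inner_self_eq_norm_sq_to_K] at h4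
  have h5 : ‖p‖ ^ 2 + ‖q‖ ^ 2 = 0 := Complex.ofReal_injective (by push_cast; exact h4)
  have hp0 : p = 0 := by
    rw [← norm_eq_zero]
    nlinarith [sq_nonneg ‖p‖, sq_nonneg ‖q‖]
  have hq0 : q = 0 := by
    rw [← norm_eq_zero]
    nlinarith [sq_nonneg ‖p‖, sq_nonneg ‖q‖]
  subst hp0 hq0
  exact ⟨(mem_pker_iff _ _).2 hp, pker_adjoint hQd ▸ (mem_pker_iff _ _).2 hq⟩

/-- Hodge decomposition: with both ranges closed, the range of `Δ` contains the orthogonal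
complement of the harmonic space. Split `y = a + b` along `ker P`. Then `a ∈ ran Q` is solved by `a = Q Q* w`
with `w ∈ ran Q ⊆ ker P`, and `b = P* P v` with `v ∈ (ker P)ᗮ ⊆ ker Q*`, so that
`Δ (v + w) = b + a`. -/
theorem harmonic_orthogonal_le_pran_nodeLap (hPd : Dense (P.domain : Set E₁))
    (hQd : Dense (Q.domain : Set E₀)) (hP : P.IsClosed) (hQ : Q.IsClosed)
    (hQP : pran Q ≤ pker P) (hPr : IsClosed (pran P : Set E₂)) (hQr : IsClosed (pran Q : Set E₁)) :
    (pker P ⊓ (pran Q)ᗮ)ᗮ ≤ pran (nodeLap Q P) := by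
  intro y hy
  have : CompleteSpace (pker P) := (isClosed_pker hP).completeSpace_coe
  have : CompleteSpace (pran Q) := hQr.completeSpace_coe
  obtain ⟨a, ha, b, hb, rfl⟩ := (pker P).exists_add_mem_mem_orthogonal y
  obtain ⟨c, hc, d, hd, rfl⟩ := (pran Q).exists_add_mem_mem_orthogonal a
  have hdP : d ∈ pker P := by simpa using (pker P).sub_mem ha (hQP hc)
  have hd0 : d = 0 := by
    have h1 := hy d ⟨hdP, hd⟩
    have h2 : inner ℂ d c = 0 := Submodule.inner_left_of_mem_orthogonal hc hd
    have h3 : inner ℂ d b = 0 := hb d hdP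
    simpa [inner_add_right, h2, h3] using h1
  subst hd0
  obtain ⟨p, hp, hpb⟩ := exists_adjoint_graph hPd hP hPr hb
  obtain ⟨v₀, hv₀⟩ := (mem_pran_iff _ _).1 hp
  obtain ⟨v, hv, hvP, -⟩ := exists_graph_orthogonal hP hv₀
  obtain ⟨u₀, hu₀⟩ := (mem_pran_iff _ _).1 hc
  obtain ⟨u, hu, huQ, -⟩ := exists_graph_orthogonal hQ hu₀
  obtain ⟨w, hw, hwu⟩ := exists_adjoint_graph hQd hQ hQr huQ
  have hvQ : (v, (0 : E₀)) ∈ Q.adjoint.graph := by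
    rw [← mem_pker_iff, pker_adjoint hQd]
    exact Submodule.orthogonal_le hQP hvP
  have hwP : (w, (0 : E₂)) ∈ P.graph := (mem_pker_iff _ _).1 (hQP hw)
  refine (mem_pran_iff _ _).2 ⟨v + w, (mem_nodeLap_graph_iff _ _ _ _).2
    ⟨p, b, u, c, ?_, hpb, ?_, hu, by abel⟩⟩
  · simpa using P.graph.add_mem hv hwP
  · simpa using Q.adjoint.graph.add_mem hvQ hwu

theorem nodeLap_fredholm (hPd : Dense (P.domain : Set E₁))
    (hQd : Dense (Q.domain : Set E₀)) (hP : P.IsClosed) (hQ : Q.IsClosed)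
    (hQP : pran Q ≤ pker P) (hPr : IsClosed (pran P : Set E₂))
    (hfin : FiniteDimensional ℂ (pker P ⧸ (pran Q).comap (pker P).subtype)) :
    FiniteDimensional ℂ (pker (nodeLap Q P)) ∧
      IsClosed (pran (nodeLap Q P) : Set E₁) ∧
      FiniteDimensional ℂ (E₁ ⧸ pran (nodeLap Q P)) := by
  have hQr := isClosed_pran_of_finiteDimensional hQ (isClosed_pker hP) hQP hfin
  have hharm := finiteDimensional_harmonic hfin
  have hle := harmonic_orthogonal_le_pran_nodeLap hPd hQd hP hQ hQP hPr hQr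
  have hquot : FiniteDimensional ℂ (E₁ ⧸ (pker P ⊓ (pran Q)ᗮ)ᗮ) :=
    Module.Finite.equiv (Submodule.quotientEquivOfIsCompl _ _
      (Submodule.isCompl_orthogonal (pker P ⊓ (pran Q)ᗮ)).symm).symm
  refine ⟨Submodule.finiteDimensional_of_le (pker_nodeLap_le hPd hQd), ?_, ?_⟩
  · exact Submodule.isClosed_mono_of_finiteDimensional_quotient
      (Submodule.isClosed_orthogonal _) hle
  · exact Module.Finite.of_surjective (Submodule.factor hle) (Submodule.factor_surjective hle)

end node

/-! ### The whole complex -/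

theorem pran_zero {E F : Type} [NormedAddCommGroup E] [InnerProductSpace ℂ E]
    [NormedAddCommGroup F] [InnerProductSpace ℂ F] : pran (0 : E →ₗ.[ℂ] F) = ⊥ := by
  exact LinearMap.range_zero

theorem isClosed_zero_pmap {E F : Type} [NormedAddCommGroup E] [InnerProductSpace ℂ E]
    [NormedAddCommGroup F] [InnerProductSpace ℂ F] : (0 : E →ₗ.[ℂ] F).IsClosed := by
  have : ((0 : E →ₗ.[ℂ] F).graph : Set (E × F)) = Prod.snd ⁻¹' {0} := by
    ext ⟨x, y⟩
    simp only [SetLike.mem_coe, LinearPMap.mem_graph_iff, Set.mem_preimage,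
      Set.mem_singleton_iff]
    exact ⟨fun ⟨_, _, h⟩ => h.symm, fun h => ⟨⟨x, trivial⟩, rfl, h.symm⟩⟩
  change _root_.IsClosed ((0 : E →ₗ.[ℂ] F).graph : Set (E × F))
  rw [this]
  exact isClosed_singleton.preimage continuous_snd

/-- a Hilbert complex `(H, P)` of length `n` is Fredholm (all cohomology spaces
`H^k = ker(P_k)/ran(P_{k−1})` are finite dimensional) if and only if for every `k` the
Laplace-type operator `Δ_k` is a Fredholm operator, i.e. its kernel is finite dimensional and
its range is closed and of finite codimension in `H_k`. -/
theorem fredholm_complex_iff_laplacians_fredholm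
    (n : ℕ) (P : ∀ k, H k →ₗ.[ℂ] H (k + 1))
    (hdense : ∀ k, Dense ((P k).domain : Set (H k)))
    (hclosed : ∀ k, (P k).IsClosed)
    (hsub : ∀ k, ∀ x : (P k).domain, ((P k) x) ∈ (P (k + 1)).domain)
    (hcomp : ∀ k, ∀ x : (P k).domain, P (k + 1) ⟨P k x, hsub k x⟩ = 0)
    (htop : ∀ k, n ≤ k → P k = 0) :
    (∀ k ≤ n, FiniteDimensional ℂ
        (↥(pker (P k)) ⧸ (prevRange P k).comap (pker (P k)).subtype)) ↔
      (∀ k ≤ n,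
        FiniteDimensional ℂ (pker (lapAt P k)) ∧
        IsClosed ((pran (lapAt P k) : Set (H k))) ∧
        FiniteDimensional ℂ (H k ⧸ pran (lapAt P k))) := by
  have hcoc : ∀ k, pran (P k) ≤ pker (P (k + 1)) := by
    rintro k _ ⟨x, rfl⟩
    exact ⟨⟨P k x, hsub k x⟩, hcomp k x, rfl⟩
  have hzero : Dense ((0 : H 0 →ₗ.[ℂ] H 0).domain : Set (H 0)) := by simp
  have hbot : pran (0 : H 0 →ₗ.[ℂ] H 0) ≤ pker (P 0) := pran_zero.le.trans bot_le
  constructor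
  · intro h k hk
    have hPr : IsClosed (pran (P k) : Set (H (k + 1))) := by
      rcases hk.lt_or_eq with hlt | rfl
      · exact isClosed_pran_of_finiteDimensional (hclosed k) (isClosed_pker (hclosed (k + 1)))
          (hcoc k) (h (k + 1) hlt)
      · rw [htop k le_rfl, pran_zero]
        exact isClosed_singleton
    cases k with
    | zero =>
      have h0 := h 0 hk
      rw [show prevRange P 0 = pran (0 : H 0 →ₗ.[ℂ] H 0) from pran_zero.symm] at h0
      exact nodeLap_fredholm (hdense 0) hzero (hclosed 0) isClosed_zero_pmap hbot hPr h0
    | succ k =>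
      exact nodeLap_fredholm (hdense (k + 1)) (hdense k) (hclosed (k + 1)) (hclosed k) (hcoc k)
        hPr (h (k + 1) hk)
  · intro h k hk
    obtain ⟨-, -, hfin⟩ := h k hk
    cases k with
    | zero =>
      rw [show prevRange P 0 = pran (0 : H 0 →ₗ.[ℂ] H 0) from pran_zero.symm]
      exact finiteDimensional_cohomology (hdense 0) hbot hfin
    | succ k => exact finiteDimensional_cohomology (hdense (k + 1)) (hcoc k) hfin
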